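/- Let α > 0 and x ≥ 2 be real numbers. Then: (i) unconditionally, if α ≤ 1/log x or α ≥ e^x then ∑_{p ≤ x} cos(α log p)/p ≤ log log x + O(1); (ii) unconditionally, if 1/log x ≤ α ≤ 10 then ∑_{p ≤ x} cos(α log p)/p ≤ log(1/α) + O(1); and (iii) assuming the Riemann Hypothesis for the Riemann zeta function, if 10 ≤ α ≤ e^x then ∑_{p ≤ x} cos(α log p)/p ≤ log log log α + O(1). All implied constants are absolute, and the sums run over primes p ≤ x. -/

import Mathlib

open Real Finset

lemma aux_term_bound (n : ℕ) (hn : 1 ≤ n) (s : ℂ) (hs : 0 < s.re) (hs1 : s ≠ 1) :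
    ‖(n : ℂ) ^ (-s) - (((n : ℂ) + 1) ^ (1 - s) - (n : ℂ) ^ (1 - s)) / (1 - s)‖
      ≤ ‖s‖ * (n : ℝ) ^ (-s.re - 1) := by
  have hn0 : (0 : ℝ) < n := by exact_mod_cast hn
  have h1s : (1 - s) ≠ 0 := sub_ne_zero.mpr (Ne.symm hs1)
  have hd : ∀ (r : ℂ), r ≠ 0 → ∀ u ∈ Set.Icc (n : ℝ) (n + 1),
      HasDerivAt (fun u : ℝ => (u : ℂ) ^ r) (r * (u : ℂ) ^ (r - 1)) u := by
    intro r hr u hu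
    have hu0 : (0 : ℝ) < u := lt_of_lt_of_le hn0 hu.1
    exact hasDerivAt_ofReal_cpow_const hu0.ne' hr |>.congr_deriv (by ring) 
  have hs0 : s ≠ 0 := by rintro rfl; simp at hs
  have key1 : ∀ u ∈ Set.Icc (n : ℝ) (n + 1), ‖(n : ℂ) ^ (-s) - (u : ℂ) ^ (-s)‖ ≤
      ‖s‖ * (n : ℝ) ^ (-s.re - 1) := by
    intro u hu
    have := (convex_Icc (n : ℝ) (n + 1)).norm_image_sub_le_of_norm_hasDerivWithin_le
      (f := fun u : ℝ => (u : ℂ) ^ (-s)) (f' := fun u => -s * (u : ℂ) ^ (-s - 1))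
      (C := ‖s‖ * (n : ℝ) ^ (-s.re - 1))
      (fun v hv => (hd (-s) (neg_ne_zero.mpr hs0) v hv).hasDerivWithinAt) (fun v hv => by
        have hv0 : (0 : ℝ) < v := lt_of_lt_of_le hn0 hv.1
        rw [norm_mul, norm_neg, Complex.norm_cpow_eq_rpow_re_of_pos hv0]
        simp only [Complex.sub_re, Complex.neg_re, Complex.one_re]
        gcongr ?_ * ?_
        exact Real.rpow_le_rpow_of_nonpos hn0 hv.1 (by linarith)) hu
      (Set.left_mem_Icc.mpr (by linarith))
    simp only [Complex.ofReal_natCast] at this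
    refine this.trans ?_
    have h2 : ‖(n : ℝ) - u‖ ≤ 1 := by
      rw [Real.norm_eq_abs, abs_le]; constructor <;> linarith [hu.1, hu.2]
    exact mul_le_of_le_one_right (by positivity) h2
  have := (convex_Icc (n : ℝ) (n + 1)).norm_image_sub_le_of_norm_hasDerivWithin_le
      (f := fun u : ℝ => (u : ℂ) * (n : ℂ) ^ (-s) - (u : ℂ) ^ (1 - s) / (1 - s))
      (f' := fun u => (n : ℂ) ^ (-s) - (u : ℂ) ^ (-s))
      (C := ‖s‖ * (n : ℝ) ^ (-s.re - 1))
      (fun v hv => by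
        have h1 := (hd (1 - s) h1s v hv).div_const (1 - s)
        have h2 : HasDerivAt (fun u : ℝ => (u : ℂ) * (n : ℂ) ^ (-s)) (1 * (n : ℂ) ^ (-s)) v :=
          (Complex.ofRealCLM.hasDerivAt (x := v)).mul_const _
        refine ((h2.sub h1).congr_deriv ?_).hasDerivWithinAt
        rw [mul_div_cancel_left₀ _ h1s, one_mul]
        congr 2; ring) key1 (Set.left_mem_Icc.mpr (by linarith : (n : ℝ) ≤ n + 1))
      (Set.right_mem_Icc.mpr (by linarith))
  simp only [Complex.ofReal_natCast, Complex.ofReal_add, Complex.ofReal_one] at this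
  calc _ = _ := by congr 1; ring
    _ ≤ _ := this
    _ = _ := by simp

noncomputable def auxT (n : ℕ) (s : ℂ) : ℂ :=
  ((n : ℂ) + 1) ^ (-s) - (((n : ℂ) + 1 + 1) ^ (1 - s) - ((n : ℂ) + 1) ^ (1 - s)) / (1 - s)

lemma auxT_bound (n : ℕ) (s : ℂ) (hs : 1 / 2 < s.re) (hs1 : s ≠ 1) :
    ‖auxT n s‖ ≤ ‖s‖ * ((n : ℝ) + 1) ^ (-(3 / 2) : ℝ) := by
  have := aux_term_bound (n + 1) (by omega) s (by linarith) hs1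
  push_cast at this
  refine this.trans ?_
  gcongr
  · have : (0 : ℝ) ≤ n := by positivity
    linarith
  · linarith

lemma aux_summable : Summable (fun n : ℕ => ((n : ℝ) + 1) ^ (-(3 / 2) : ℝ)) := by
  have := (summable_nat_add_iff 1).mpr (Real.summable_nat_rpow.mpr (by norm_num : (-(3/2) : ℝ) < -1))
  simpa using this

lemma auxT_tsum (s : ℂ) (hs : 1 < s.re) : ∑' n, auxT n s = riemannZeta s - 1 / (s - 1) := by
  have hs1 : s ≠ 1 := by rintro rfl; simp at hs
  have h1s : (1 - s) ≠ 0 := sub_ne_zero.mpr (Ne.symm hs1)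
  have hz : HasSum (fun n : ℕ => ((n : ℂ) + 1) ^ (-s)) (riemannZeta s) := by
    have h := zeta_eq_tsum_one_div_nat_add_one_cpow hs
    have hsum : Summable (fun n : ℕ => 1 / ((n : ℂ) + 1) ^ s) := by
      have := (summable_nat_add_iff 1).mpr (Complex.summable_one_div_nat_cpow.mpr hs)
      simpa using this
    rw [h]
    convert hsum.hasSum using 2 with n
    rw [Complex.cpow_neg, one_div]
  have hlim : Filter.Tendsto (fun n : ℕ => ((n : ℂ) + 1) ^ (1 - s)) Filter.atTop (nhds 0) := by
    rw [tendsto_zero_iff_norm_tendsto_zero]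
    have : (fun n : ℕ => ‖((n : ℂ) + 1) ^ (1 - s)‖) = fun n : ℕ => ((n : ℝ) + 1) ^ (-(s.re - 1)) := by
      funext n
      have : ((n : ℂ) + 1) = (((n : ℝ) + 1 : ℝ) : ℂ) := by push_cast; rfl
      rw [this, Complex.norm_cpow_eq_rpow_re_of_pos (by positivity)]
      simp
    rw [this]
    exact (tendsto_rpow_neg_atTop (by linarith)).comp
      (Filter.tendsto_atTop_add_const_right _ _ tendsto_natCast_atTop_atTop)
  have hsumT : Summable (fun n => auxT n s) := by
    refine Summable.of_norm_bounded (aux_summable.mul_left ‖s‖) (fun n => auxT_bound n s (by linarith) hs1)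
  have htel : HasSum (fun n : ℕ => ((n : ℂ) + 1 + 1) ^ (1 - s) - ((n : ℂ) + 1) ^ (1 - s)) (0 - 1) := by
    have hsum2 : Summable (fun n : ℕ => ((n : ℂ) + 1 + 1) ^ (1 - s) - ((n : ℂ) + 1) ^ (1 - s)) := by
      have := (hz.summable.sub hsumT).mul_right (1 - s)
      refine this.congr (fun n => ?_)
      simp only [auxT]
      field_simp
      ring
    refine (hsum2.hasSum_iff_tendsto_nat).mpr ?_
    have : (fun N : ℕ => ∑ i ∈ Finset.range N, (((i : ℂ) + 1 + 1) ^ (1 - s) - ((i : ℂ) + 1) ^ (1 - s)))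
       = fun N : ℕ => ((N : ℂ) + 1) ^ (1 - s) - 1 := by
      funext N
      have := Finset.sum_range_sub (fun i : ℕ => ((i : ℂ) + 1) ^ (1 - s)) N
      simpa using this
    rw [this]
    exact hlim.sub_const 1
  have := (hz.sub (htel.div_const (1 - s))).tsum_eq
  simp only [auxT]
  rw [this]
  have : s - 1 ≠ 0 := sub_ne_zero.mpr hs1
  field_simp
  ring

lemma auxT_zeta (s : ℂ) (hs : 1 / 2 < s.re) (hi : 0 < s.im) :
    ∑' n, auxT n s = riemannZeta s - 1 / (s - 1) := by
  set B : ℝ := s.im + 2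
  set A : ℝ := s.re + 3
  let U : Set ℂ := Set.Ioo (1/2 : ℝ) A ×ℂ Set.Ioo 0 B
  have hUo : IsOpen U := isOpen_Ioo.reProdIm isOpen_Ioo
  have hUc : Convex ℝ U := ((convex_Ioo _ _).linear_preimage Complex.reLm).inter ((convex_Ioo _ _).linear_preimage Complex.imLm)
  have hne : ∀ z ∈ U, z ≠ 1 := by
    rintro z hz rfl
    have := hz.2.1; simp at this
  have hd1 : DifferentiableOn ℂ (fun z => ∑' n, auxT n z) U := by
    refine Complex.differentiableOn_tsum_of_summable_norm (u := fun n : ℕ => (A + B) * ((n : ℝ) + 1) ^ (-(3 / 2) : ℝ))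
      (aux_summable.mul_left _) (fun n z hz => ?_) hUo (fun n z hz => ?_)
    · have h1 : (1 - z) ≠ 0 := sub_ne_zero.mpr (Ne.symm (hne z hz))
      have h2 : ((n : ℂ) + 1) ≠ 0 := by exact_mod_cast Nat.succ_ne_zero n
      have h3 : ((n : ℂ) + 1 + 1) ≠ 0 := by exact_mod_cast Nat.succ_ne_zero (n + 1)
      unfold auxT
      refine DifferentiableAt.differentiableWithinAt ?_
      refine DifferentiableAt.sub ?_ (DifferentiableAt.div (DifferentiableAt.sub ?_ ?_) (by fun_prop) h1)
      · exact DifferentiableAt.const_cpow (by fun_prop) (Or.inl h2)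
      · exact DifferentiableAt.const_cpow (by fun_prop) (Or.inl h3)
      · exact DifferentiableAt.const_cpow (by fun_prop) (Or.inl h2)
    · refine (auxT_bound n z hz.1.1 (hne z hz)).trans ?_
      gcongr
      refine (Complex.norm_le_abs_re_add_abs_im z).trans ?_
      rw [abs_of_pos (by linarith [hz.1.1]), abs_of_pos hz.2.1]
      linarith [hz.1.2, hz.2.2]
  have hd2 : DifferentiableOn ℂ (fun z => riemannZeta z - 1 / (z - 1)) U := by
    intro z hz
    refine DifferentiableAt.differentiableWithinAt ?_
    refine (differentiableAt_riemannZeta (hne z hz)).sub ?_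
    exact DifferentiableAt.div (by fun_prop) (by fun_prop) (sub_ne_zero.mpr (hne z hz))
  have hmem : (⟨2, 1⟩ : ℂ) ∈ U := by
    refine ⟨⟨?_, ?_⟩, ?_, ?_⟩ <;> simp [A, B] <;> linarith
  have heq := (hd1.analyticOnNhd hUo).eqOn_of_preconnected_of_eventuallyEq (hd2.analyticOnNhd hUo)
    hUc.isPreconnected hmem (by
      have : {z : ℂ | 1 < z.re} ∈ nhds (⟨2, 1⟩ : ℂ) :=
        (isOpen_lt continuous_const Complex.continuous_re).mem_nhds (by simp)
      filter_upwards [this] with z hz using auxT_tsum z hz)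
  refine heq ⟨⟨hs, ?_⟩, hi, ?_⟩
  · simp [A]
  · simp [B]

lemma zeta_growth : ∃ K : ℝ, 1 ≤ K ∧ ∀ s : ℂ, 1 / 2 < s.re → s.re < 4 → 1 ≤ s.im →
    ‖riemannZeta s‖ ≤ K * s.im := by
  set S := ∑' n : ℕ, ((n : ℝ) + 1) ^ (-(3 / 2) : ℝ)
  have hS : 0 ≤ S := tsum_nonneg (fun n => by positivity)
  refine ⟨5 * S + 1, by linarith, fun s h1 h2 h3 => ?_⟩
  have hne : s ≠ 1 := by rintro rfl; norm_num at h3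
  have h := auxT_zeta s h1 (by linarith)
  have h' : riemannZeta s = ∑' n, auxT n s + 1 / (s - 1) := by rw [h]; ring
  have hb : ‖∑' n, auxT n s‖ ≤ ‖s‖ * S := by
    have := tsum_of_norm_bounded (aux_summable.mul_left ‖s‖).hasSum (fun n => auxT_bound n s h1 hne)
    rwa [tsum_mul_left] at this
  have hs : ‖s‖ ≤ 5 * s.im := by
    refine (Complex.norm_le_abs_re_add_abs_im s).trans ?_
    rw [abs_of_pos (by linarith), abs_of_pos (by linarith)]
    linarith
  have hq : ‖1 / (s - 1)‖ ≤ 1 := by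
    rw [norm_div, norm_one]
    have : 1 ≤ ‖s - 1‖ := by
      refine le_trans ?_ (Complex.abs_im_le_norm _)
      simp only [Complex.sub_im, Complex.one_im, sub_zero]
      exact h3.trans (le_abs_self _)
    exact div_le_one_of_le₀ this (by positivity)
  rw [h']
  calc _ ≤ ‖s‖ * S + 1 := (norm_add_le _ _).trans (add_le_add hb hq)
    _ ≤ 5 * s.im * S + s.im := by gcongr
    _ = _ := by ring

lemma zeta1_ne_zero (s : ℂ) (hs : 1 ≤ s.re) : riemannZeta₁ s ≠ 0 := by
  by_cases h : s = 1
  · subst h; simp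
  · intro h0
    have := riemannZeta_eq_inv_sub_mul h
    rw [h0, mul_zero] at this
    exact riemannZeta_ne_zero_of_one_le_re hs this

lemma zeta1_bound : ∃ K : ℝ, 1 ≤ K ∧ ∀ s : ℂ, 1 ≤ s.re → s.re ≤ 3 → 0 ≤ s.im → s.im ≤ 10 →
    ‖riemannZeta₁ s‖ ≤ K := by
  have hc : IsCompact (Set.Icc (1 : ℝ) 3 ×ℂ Set.Icc (0 : ℝ) 10) := isCompact_Icc.reProdIm isCompact_Icc
  obtain ⟨K, hK⟩ := hc.exists_bound_of_continuousOn differentiable_riemannZeta₁.continuous.continuousOn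
  exact ⟨max 1 K, le_max_left _ _, fun s h1 h2 h3 h4 => (hK s ⟨⟨h1, h2⟩, h3, h4⟩).trans (le_max_right _ _)⟩

lemma zeta1_logDeriv_bound : ∃ K : ℝ, 0 ≤ K ∧ ∀ s : ℂ, 1 ≤ s.re → s.re ≤ 3 → 0 ≤ s.im → s.im ≤ 10 →
    ‖deriv riemannZeta₁ s / riemannZeta₁ s‖ ≤ K := by
  have hc : IsCompact (Set.Icc (1 : ℝ) 3 ×ℂ Set.Icc (0 : ℝ) 10) := isCompact_Icc.reProdIm isCompact_Icc
  obtain ⟨K, hK⟩ := hc.exists_bound_of_continuousOn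
    (f := fun s => deriv riemannZeta₁ s / riemannZeta₁ s)
    (differentiable_riemannZeta₁.deriv.continuous.continuousOn.div 
      differentiable_riemannZeta₁.continuous.continuousOn (fun s hs => zeta1_ne_zero s hs.1.1))
  exact ⟨max 0 K, le_max_left _ _, fun s h1 h2 h3 h4 => (hK s ⟨⟨h1, h2⟩, h3, h4⟩).trans (le_max_right _ _)⟩

noncomputable def vmT (σ : ℝ) (n : ℕ) : ℝ := ArithmeticFunction.vonMangoldt n * (n : ℝ) ^ (-σ)

lemma vmT_nonneg (σ : ℝ) (n : ℕ) : 0 ≤ vmT σ n :=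
  mul_nonneg ArithmeticFunction.vonMangoldt_nonneg (by positivity)

lemma norm_term_vm (s : ℂ) (n : ℕ) :
    ‖LSeries.term (fun n => (ArithmeticFunction.vonMangoldt n : ℂ)) s n‖ = vmT s.re n := by
  rw [LSeries.norm_term_eq]
  by_cases h : n = 0
  · simp [h, vmT]
  · rw [if_neg h, vmT, Real.rpow_neg (by positivity), ← div_eq_mul_inv, Complex.norm_real, Real.norm_of_nonneg ArithmeticFunction.vonMangoldt_nonneg]

lemma vmT_summable (σ : ℝ) (hσ : 1 < σ) : Summable (vmT σ) := by
  have := (ArithmeticFunction.LSeriesSummable_vonMangoldt (s := (σ : ℂ)) (by simpa using hσ)).norm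
  refine this.congr (fun n => ?_)
  rw [norm_term_vm]; simp

lemma logDeriv_zeta_le (s : ℂ) (hs : 1 < s.re) :
    ‖deriv riemannZeta s / riemannZeta s‖ ≤ ∑' n, vmT s.re n := by
  have h := ArithmeticFunction.LSeries_vonMangoldt_eq_deriv_riemannZeta_div hs
  have : deriv riemannZeta s / riemannZeta s = - LSeries (fun n => (ArithmeticFunction.vonMangoldt n : ℂ)) s := by
    rw [h]; ring
  rw [this, norm_neg, LSeries]
  exact tsum_of_norm_bounded (vmT_summable _ hs).hasSum (fun n => (norm_term_vm s n).le)

lemma vmT_bound : ∃ C : ℝ, 0 ≤ C ∧ ∀ δ : ℝ, 0 < δ → δ ≤ 2 → ∑' n, vmT (1 + δ) n ≤ 1 / δ + C := by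
  obtain ⟨K, hK0, hK⟩ := zeta1_logDeriv_bound
  refine ⟨K, hK0, fun δ h0 h2 => ?_⟩
  set s : ℂ := ((1 + δ : ℝ) : ℂ) with hs
  have hre : s.re = 1 + δ := by rw [hs, Complex.ofReal_re]
  have him : s.im = 0 := by rw [hs, Complex.ofReal_im]
  have hs1 : 1 < s.re := by linarith
  have hne : s ≠ 1 := by rintro h; rw [h] at hs1; simp at hs1
  have h := ArithmeticFunction.LSeries_vonMangoldt_eq_deriv_riemannZeta_div hs1
  have h2' : ((∑' n, vmT (1 + δ) n : ℝ) : ℂ) = - deriv riemannZeta s / riemannZeta s := by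
    rw [← h, LSeries, Complex.ofReal_tsum]
    refine tsum_congr (fun n => ?_)
    rw [LSeries.term_def]
    by_cases hn : n = 0
    · simp [hn, vmT]
    · rw [if_neg hn, vmT, Real.rpow_neg (by positivity), ← div_eq_mul_inv, Complex.ofReal_div, hs,
        Complex.ofReal_cpow (by positivity)]
      simp
  have hz1 := zeta1_ne_zero s hs1.le
  have hsne : s - 1 ≠ 0 := sub_ne_zero.mpr hne
  have h3 : - deriv riemannZeta s / riemannZeta s = ((1 / δ : ℝ) : ℂ) - deriv riemannZeta₁ s / riemannZeta₁ s := by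
    have hd : ((1 / δ : ℝ) : ℂ) = (s - 1)⁻¹ := by rw [hs]; push_cast; simp
    rw [hd, deriv_riemannZeta_eq_neg_inv_sub_sq_mul_add hne, riemannZeta_eq_inv_sub_mul hne]
    field_simp
    ring
  have h4 : ‖((∑' n, vmT (1 + δ) n : ℝ) : ℂ)‖ ≤ 1 / δ + K := by
    rw [h2', h3]
    refine (norm_sub_le _ _).trans (add_le_add ?_ (hK s hs1.le (by linarith) (by linarith) (by linarith)))
    rw [Complex.norm_real, Real.norm_of_nonneg (by positivity)]
  rw [Complex.norm_real] at h4
  exact (le_abs_self _).trans h4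

lemma step1_term (α x : ℝ) (hx : 2 ≤ x) (p : ℕ) (hp : p.Prime) :
    (if p ∈ Finset.filter Nat.Prime (Finset.Iic ⌊x⌋₊) then Real.cos (α * Real.log p) / p else 0)
    ≤ (-Complex.log (1 - (p : ℂ) ^ (-(⟨1 + 1 / Real.log x, α⟩ : ℂ)))).re + (p : ℝ) ^ (-2 : ℝ)
      + Real.exp 1 * (1 / Real.log x) * vmT (1 + 1 / Real.log x) p := by
  have hL : 0 < Real.log x := Real.log_pos (by linarith)
  set δ := 1 / Real.log x with hδ
  have hδ0 : 0 < δ := by positivity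
  set s : ℂ := ⟨1 + δ, α⟩
  have hp2 : (2 : ℝ) ≤ p := by exact_mod_cast hp.two_le
  have hp0 : (0 : ℝ) < p := by linarith
  have hlp : 0 < Real.log p := Real.log_pos (by linarith)
  set z : ℂ := (p : ℂ) ^ (-s) with hz
  have hzn : ‖z‖ = (p : ℝ) ^ (-(1 + δ)) := by
    have := Complex.norm_cpow_eq_rpow_re_of_pos hp0 (-s)
    simpa [s, hz] using this
  have hz1 : ‖z‖ ≤ (p : ℝ) ^ (-1 : ℝ) := by
    rw [hzn]; exact Real.rpow_le_rpow_of_exponent_le (by linarith) (by linarith)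
  have hzhalf : ‖z‖ ≤ 1 / 2 := by
    refine hz1.trans ?_
    rw [Real.rpow_neg_one, inv_eq_one_div]
    gcongr
  have hsq : ‖z‖ ^ 2 ≤ (p : ℝ) ^ (-2 : ℝ) := by
    calc ‖z‖ ^ 2 ≤ ((p : ℝ) ^ (-1 : ℝ)) ^ 2 := by gcongr
      _ = _ := by rw [← Real.rpow_natCast, ← Real.rpow_mul hp0.le]; norm_num
  have hlog : z.re - (p : ℝ) ^ (-2 : ℝ) ≤ (-Complex.log (1 - z)).re := by
    have h := Complex.norm_log_one_add_sub_self_le (z := -z) (by rw [norm_neg]; linarith)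
    rw [norm_neg, ← sub_eq_add_neg] at h
    have h1 : ‖z‖ ^ 2 * (1 - ‖z‖)⁻¹ / 2 ≤ ‖z‖ ^ 2 := by
      have : (1 - ‖z‖)⁻¹ ≤ 2 := by
        rw [inv_le_comm₀ (by linarith) (by norm_num)]; linarith
      nlinarith [sq_nonneg ‖z‖]
    have h2 := (Complex.re_le_norm (Complex.log (1 - z) - -z)).trans (h.trans (h1.trans hsq))
    simp only [Complex.sub_re, Complex.neg_re] at h2 ⊢
    linarith
  have hzre : z.re = (p : ℝ) ^ (-(1 + δ)) * Real.cos (α * Real.log p) := by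
    rw [hz, Complex.cpow_def_of_ne_zero (by exact_mod_cast hp0.ne'), ← Complex.natCast_log, Complex.exp_re]
    rw [Real.rpow_def_of_pos hp0]
    simp only [s, Complex.mul_re, Complex.mul_im, Complex.neg_re, Complex.neg_im, Complex.ofReal_re, Complex.ofReal_im]
    rw [← Real.cos_neg (α * Real.log p)]
    congr 2 <;> ring
  have hexp : (p : ℝ) ^ (-(1 + δ)) = (p : ℝ)⁻¹ * Real.exp (-(δ * Real.log p)) := by
    rw [Real.rpow_def_of_pos hp0, ← Real.exp_log (inv_pos.mpr hp0), ← Real.exp_add, Real.log_inv]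
    congr 1; ring
  have hvm : vmT (1 + δ) p = Real.log p * ((p : ℝ)⁻¹ * Real.exp (-(δ * Real.log p))) := by
    rw [vmT, ArithmeticFunction.vonMangoldt_apply_prime hp, hexp]
  suffices h : (if p ∈ Finset.filter Nat.Prime (Finset.Iic ⌊x⌋₊) then Real.cos (α * Real.log p) / p else 0)
      ≤ z.re + Real.exp 1 * δ * vmT (1 + δ) p by linarith
  rw [hzre, hvm, hexp]
  set c := Real.cos (α * Real.log p)
  have hc1 : c ≤ 1 := Real.cos_le_one _
  have hc2 : -1 ≤ c := Real.neg_one_le_cos _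
  set u := δ * Real.log p with hu
  have hu0 : 0 < u := by positivity
  have hE : 0 < Real.exp (-u) := Real.exp_pos _
  have hpi : 0 < (p : ℝ)⁻¹ := by positivity
  have hmain : Real.exp 1 * δ * (Real.log p * ((p : ℝ)⁻¹ * Real.exp (-u))) = (p : ℝ)⁻¹ * (Real.exp 1 * u * Real.exp (-u)) := by
    rw [hu]; ring
  rw [hmain]
  have hfl : p ∈ Finset.filter Nat.Prime (Finset.Iic ⌊x⌋₊) ↔ (p : ℝ) ≤ x := by
    simp [hp, Nat.le_floor_iff (by linarith : 0 ≤ x)]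
  have he1 : 1 ≤ Real.exp 1 := Real.one_le_exp (by norm_num)
  by_cases hpx : (p : ℝ) ≤ x
  · rw [if_pos (hfl.mpr hpx)]
    have hu1 : u ≤ 1 := by
      rw [hu, hδ, one_div, inv_mul_le_one₀ hL]
      exact Real.log_le_log hp0 hpx
    have h1 : 1 - u ≤ Real.exp (-u) := by linarith [Real.add_one_le_exp (-u)]
    have h2 : 1 ≤ Real.exp 1 * Real.exp (-u) := by
      rw [← Real.exp_add]; exact Real.one_le_exp (by linarith)
    have hEle : Real.exp (-u) ≤ 1 := Real.exp_le_one_iff.mpr (by linarith)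
    have h3 : c ≤ Real.exp (-u) * c + Real.exp 1 * u * Real.exp (-u) := by
      have : u ≤ Real.exp 1 * u * Real.exp (-u) := by nlinarith
      nlinarith
    calc c / p = (p : ℝ)⁻¹ * c := by ring
      _ ≤ (p : ℝ)⁻¹ * (Real.exp (-u) * c + Real.exp 1 * u * Real.exp (-u)) := by gcongr
      _ = _ := by ring
  · rw [if_neg (fun h => hpx (hfl.mp h))]
    have hu1 : 1 ≤ u := by
      rw [hu, hδ, one_div, ← div_eq_inv_mul, one_le_div hL]
      exact Real.log_le_log (by linarith) (le_of_not_ge hpx)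
    have : 0 ≤ c + Real.exp 1 * u := by nlinarith
    have : 0 ≤ (p : ℝ)⁻¹ * Real.exp (-u) * (c + Real.exp 1 * u) := by positivity
    linarith

lemma step1 : ∃ C : ℝ, ∀ (α x : ℝ), 2 ≤ x →
    ∑ p ∈ Finset.filter Nat.Prime (Finset.Iic ⌊x⌋₊), Real.cos (α * Real.log p) / p
      ≤ Real.log ‖riemannZeta ⟨1 + 1 / Real.log x, α⟩‖ + C := by
  obtain ⟨C, hC0, hC⟩ := vmT_bound
  refine ⟨∑' q : Nat.Primes, ((q : ℕ) : ℝ) ^ (-2 : ℝ) + Real.exp 1 * (1 + 2 * C), fun α x hx => ?_⟩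
  have hL : 0 < Real.log x := Real.log_pos (by linarith)
  have hL2 : 1 / 2 ≤ Real.log x := by
    have := Real.log_le_log (by norm_num) hx
    linarith [Real.log_two_gt_d9]
  set δ := 1 / Real.log x with hδ
  have hδ0 : 0 < δ := by positivity
  have hδ2 : δ ≤ 2 := by
    rw [hδ, div_le_iff₀ hL]; linarith
  set s : ℂ := ⟨1 + δ, α⟩ with hs
  have hs1 : 1 < s.re := by simp [hs, hδ0]
  set F := Finset.filter Nat.Prime (Finset.Iic ⌊x⌋₊)
  let f : ℕ → ℝ := fun p => Real.cos (α * Real.log p) / p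
  have hfin : ∑ p ∈ F, f p = ∑' q : Nat.Primes, (if (q : ℕ) ∈ F then f q else 0) := by
    have h1 : ∑' q : Nat.Primes, (if (q : ℕ) ∈ F then f q else 0) =
      ∑' n, Set.indicator {p : ℕ | p.Prime} (fun n => if n ∈ F then f n else 0) n :=
      tsum_subtype {p : ℕ | p.Prime} (fun n => if n ∈ F then f n else 0)
    rw [h1, tsum_eq_sum (s := F)]
    · refine Finset.sum_congr rfl (fun n hn => ?_)
      have : n.Prime := (Finset.mem_filter.mp hn).2
      simp [Set.indicator, this, hn]
    · intro n hn
      simp [Set.indicator, hn]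
  have hsum0 : Summable (fun q : Nat.Primes => (if (q : ℕ) ∈ F then f q else 0)) := by
    have : Summable (fun n : ℕ => (if n ∈ F then f n else 0)) :=
      summable_of_ne_finset_zero (s := F) (fun n hn => by simp [hn])
    exact this.comp_injective (Nat.Primes.coe_nat_injective)
  have hsum1 : Summable (fun q : Nat.Primes => -Complex.log (1 - ((q : ℕ) : ℂ) ^ (-s))) := by
    have := DirichletCharacter.summable_neg_log_one_sub_mul_prime_cpow (N := 1) 1 hs1
    refine this.congr (fun p => ?_)
    rw [MulChar.one_apply (isUnit_of_subsingleton _), one_mul]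
  have hsum1' : Summable (fun q : Nat.Primes => (-Complex.log (1 - ((q : ℕ) : ℂ) ^ (-s))).re) :=
    (Complex.hasSum_re hsum1.hasSum).summable
  have hsum2 : Summable (fun q : Nat.Primes => ((q : ℕ) : ℝ) ^ (-2 : ℝ)) :=
    Nat.Primes.summable_rpow.mpr (by norm_num)
  have hsum3' := vmT_summable (1 + δ) (by linarith)
  have hsum3 : Summable (fun q : Nat.Primes => vmT (1 + δ) q) :=
    hsum3'.comp_injective (Nat.Primes.coe_nat_injective)
  have hle := Summable.tsum_le_tsum (fun q : Nat.Primes => step1_term α x hx q q.2) hsum0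
    ((hsum1'.add hsum2).add (hsum3.mul_left (Real.exp 1 * δ)))
  rw [← hfin, Summable.tsum_add (hsum1'.add hsum2) (hsum3.mul_left _),
    Summable.tsum_add hsum1' hsum2, tsum_mul_left] at hle
  have hz : Real.log ‖riemannZeta s‖ = ∑' q : Nat.Primes, (-Complex.log (1 - ((q : ℕ) : ℂ) ^ (-s))).re := by
    rw [← riemannZeta_eulerProduct_exp_log hs1, Complex.norm_exp, Real.log_exp, Complex.re_tsum hsum1]
  have h3 : ∑' q : Nat.Primes, vmT (1 + δ) q ≤ 1 / δ + C := by
    refine le_trans ?_ (hC δ hδ0 hδ2)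
    exact tsum_comp_le_tsum_of_inj hsum3' (vmT_nonneg _) (Nat.Primes.coe_nat_injective)
  have h4 : Real.exp 1 * δ * ∑' q : Nat.Primes, vmT (1 + δ) q ≤ Real.exp 1 * (1 + 2 * C) := by
    rw [mul_assoc]
    refine mul_le_mul_of_nonneg_left ?_ (Real.exp_pos 1).le
    calc δ * ∑' q : Nat.Primes, vmT (1 + δ) q ≤ δ * (1 / δ + C) := by gcongr
      _ = 1 + δ * C := by field_simp
      _ ≤ _ := by gcongr
  rw [hz]
  linarith

lemma zeta_two_lower : ∃ c : ℝ, 0 ≤ c ∧ ∀ s : ℂ, s.re = 2 → -c ≤ Real.log ‖riemannZeta s‖ := by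
  have hsum2 : Summable (fun q : Nat.Primes => ((q : ℕ) : ℝ) ^ (-2 : ℝ)) :=
    Nat.Primes.summable_rpow.mpr (by norm_num)
  refine ⟨3 / 2 * ∑' q : Nat.Primes, ((q : ℕ) : ℝ) ^ (-2 : ℝ), by positivity, fun s hs => ?_⟩
  have hs1 : 1 < s.re := by linarith
  rw [← riemannZeta_eulerProduct_exp_log hs1, Complex.norm_exp, Real.log_exp]
  have hb : ‖∑' q : Nat.Primes, -Complex.log (1 - ((q : ℕ) : ℂ) ^ (-s))‖ ≤
      3 / 2 * ∑' q : Nat.Primes, ((q : ℕ) : ℝ) ^ (-2 : ℝ) := by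
    refine tsum_of_norm_bounded (hsum2.hasSum.mul_left (3 / 2)) (fun q => ?_)
    have hp2 : (2 : ℝ) ≤ (q : ℕ) := by exact_mod_cast q.2.two_le
    have hp0 : (0 : ℝ) < (q : ℕ) := by linarith
    have hzn : ‖((q : ℕ) : ℂ) ^ (-s)‖ = ((q : ℕ) : ℝ) ^ (-2 : ℝ) := by
      have := Complex.norm_cpow_eq_rpow_re_of_pos hp0 (-s)
      simpa [hs] using this
    have hhalf : ((q : ℕ) : ℝ) ^ (-2 : ℝ) ≤ 1 / 2 := by
      calc ((q : ℕ) : ℝ) ^ (-2 : ℝ) ≤ ((q : ℕ) : ℝ) ^ (-1 : ℝ) :=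
            Real.rpow_le_rpow_of_exponent_le (by linarith) (by norm_num)
        _ ≤ 1 / 2 := by
            rw [Real.rpow_neg_one, inv_eq_one_div]
            gcongr
    have := Complex.norm_log_one_add_half_le_self (z := -((q : ℕ) : ℂ) ^ (-s))
      (by rw [norm_neg, hzn]; exact hhalf)
    rw [norm_neg, hzn, ← sub_eq_add_neg] at this
    rw [norm_neg]; exact this
  have := (abs_le.mp ((Complex.abs_re_le_norm _).trans hb)).1
  exact this

lemma ball_facts (t : ℝ) (z : ℂ) (hz : z ∈ Metric.ball (⟨2, t⟩ : ℂ) (7 / 5)) :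
    3 / 5 < z.re ∧ z.re < 17 / 5 ∧ t - 7 / 5 < z.im ∧ z.im < t + 7 / 5 := by
  rw [Metric.mem_ball, dist_eq_norm] at hz
  have h1 := abs_lt.mp ((Complex.abs_re_le_norm _).trans_lt hz)
  have h2 := abs_lt.mp ((Complex.abs_im_le_norm _).trans_lt hz)
  simp only [Complex.sub_re, Complex.sub_im] at h1 h2
  refine ⟨?_, ?_, ?_, ?_⟩ <;> linarith [h1.1, h1.2, h2.1, h2.2]

lemma ball_ne (hRH : RiemannHypothesis) (t : ℝ) (ht : 10 ≤ t) (z : ℂ)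
    (hz : z ∈ Metric.ball (⟨2, t⟩ : ℂ) (7 / 5)) : z ≠ 1 ∧ riemannZeta z ≠ 0 := by
  obtain ⟨h1, h2, h3, h4⟩ := ball_facts t z hz
  have hne : z ≠ 1 := by rintro rfl; simp at h3; linarith
  refine ⟨hne, fun h0 => ?_⟩
  have := hRH z h0 (by
    rintro ⟨n, hn⟩
    have : z.im = 0 := by rw [hn]; simp
    linarith) hne
  linarith

lemma logDeriv_diff (hRH : RiemannHypothesis) (t : ℝ) (ht : 10 ≤ t) :
    DifferentiableOn ℂ (fun z => deriv riemannZeta z / riemannZeta z)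
      (Metric.ball (⟨2, t⟩ : ℂ) (7 / 5)) := by
  have hz : DifferentiableOn ℂ riemannZeta (Metric.ball (⟨2, t⟩ : ℂ) (7 / 5)) := fun z hz =>
    (differentiableAt_riemannZeta (ball_ne hRH t ht z hz).1).differentiableWithinAt
  exact (hz.deriv Metric.isOpen_ball).div hz (fun z hz => (ball_ne hRH t ht z hz).2)

lemma exists_log (hRH : RiemannHypothesis) (t : ℝ) (ht : 10 ≤ t) :
    ∃ g : ℂ → ℂ, g ⟨2, t⟩ = 0 ∧
      (∀ z ∈ Metric.ball (⟨2, t⟩ : ℂ) (7 / 5),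
        HasDerivAt g (deriv riemannZeta z / riemannZeta z) z) ∧
      ∀ z ∈ Metric.ball (⟨2, t⟩ : ℂ) (7 / 5),
        Real.log ‖riemannZeta z‖ = Real.log ‖riemannZeta ⟨2, t⟩‖ + (g z).re := by
  obtain ⟨g, hg0, hg⟩ := (logDeriv_diff hRH t ht).isExactOn_ball.with_val_at ⟨2, t⟩ 0
  refine ⟨g, hg0, hg, fun z hz => ?_⟩
  have hmem : (⟨2, t⟩ : ℂ) ∈ Metric.ball (⟨2, t⟩ : ℂ) (7 / 5) := Metric.mem_ball_self (by norm_num)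
  have hconst : ∀ w ∈ Metric.ball (⟨2, t⟩ : ℂ) (7 / 5),
      HasDerivWithinAt (fun w => riemannZeta w * Complex.exp (-g w)) 0 (Metric.ball (⟨2, t⟩ : ℂ) (7 / 5)) w := by
    intro w hw
    have hne := ball_ne hRH t ht w hw
    have h1 := (differentiableAt_riemannZeta hne.1).hasDerivAt
    have h2 := (hg w hw).neg.cexp
    refine ((h1.mul h2).congr_deriv ?_).hasDerivWithinAt
    have := hne.2
    simp only [Pi.neg_apply]
    field_simp
    ring
  have heq := (convex_ball (⟨2, t⟩ : ℂ) (7 / 5)).norm_image_sub_le_of_norm_hasDerivWithin_le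
    (C := 0) hconst (fun w hw => by simp) hmem hz
  rw [zero_mul, norm_le_zero_iff, sub_eq_zero] at heq
  simp only [hg0, neg_zero, Complex.exp_zero, mul_one] at heq
  rw [← heq, norm_mul, Complex.norm_exp, Real.log_mul (norm_ne_zero_iff.mpr (ball_ne hRH t ht z hz).2)
    (Real.exp_pos _).ne', Real.log_exp]
  simp

lemma log_ten_le (t : ℝ) (ht : 10 ≤ t) : 2 ≤ Real.log t := by
  rw [Real.le_log_iff_exp_le (by linarith)]
  have h := Real.exp_one_lt_d9
  have : Real.exp 2 = Real.exp 1 * Real.exp 1 := by rw [← Real.exp_add]; norm_num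
  rw [this]
  nlinarith [Real.exp_pos 1]

lemma logDeriv_bound : ∃ A : ℝ, 1 ≤ A ∧ (RiemannHypothesis → ∀ t : ℝ, 10 ≤ t → ∀ s : ℂ,
    ‖s - ⟨2, t⟩‖ ≤ 6 / 5 → ‖deriv riemannZeta s / riemannZeta s‖ ≤ A * Real.log t) := by
  obtain ⟨c, hc0, hc⟩ := zeta_two_lower
  obtain ⟨K, hK1, hK⟩ := zeta_growth
  have hlK : 0 ≤ Real.log K := Real.log_nonneg hK1
  refine ⟨260 * (Real.log K + 2 + c), by linarith, fun hRH t ht s hs => ?_⟩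
  have hlt := log_ten_le t ht
  obtain ⟨g, hg0, hg, hgl⟩ := exists_log hRH t ht
  set s0 : ℂ := ⟨2, t⟩ with hs0
  set M := (Real.log K + 2 + c) * Real.log t with hM
  have hMpos : 0 < M := by positivity
  have hre : ∀ z ∈ Metric.ball s0 (7 / 5), (g z).re ≤ M := by
    intro z hz
    obtain ⟨h1, h2, h3, h4⟩ := ball_facts t z hz
    have hgr := hK z (by linarith) (by linarith) (by linarith)
    have hn0 := (ball_ne hRH t ht z hz).2
    have h5 : Real.log ‖riemannZeta z‖ ≤ Real.log (K * (t * t)) := by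
      refine Real.log_le_log (norm_pos_iff.mpr hn0) (hgr.trans ?_)
      gcongr
      nlinarith
    rw [Real.log_mul (by linarith) (by positivity), Real.log_mul (by linarith) (by linarith)] at h5
    have h6 := hgl z hz
    have h7 := hc s0 rfl
    have : Real.log K ≤ Real.log K * Real.log t := by nlinarith
    have : c ≤ c * Real.log t := by nlinarith
    rw [hM]
    linarith
  have hBC : ∀ z : ℂ, ‖z - s0‖ ≤ 13 / 10 → ‖g z‖ ≤ 26 * M := by
    intro z hz
    have hmaps : ∀ w ∈ Metric.ball (0 : ℂ) (7 / 5), s0 + w ∈ Metric.ball s0 (7 / 5) := by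
      intro w hw
      rw [mem_ball_zero_iff] at hw
      rw [Metric.mem_ball, dist_eq_norm]; simpa using hw
    have := Complex.borelCaratheodory_zero (f := fun w => g (s0 + w)) (M := M) (R := 7 / 5) (z := z - s0)
      hMpos (fun w hw => ?_) (fun w hw => hre _ (hmaps w hw)) (by norm_num)
      (by rw [mem_ball_zero_iff]; linarith) (by simpa using hg0)
    · simp only [add_sub_cancel] at this
      refine this.trans ?_
      rw [div_le_iff₀ (by linarith)]
      nlinarith [norm_nonneg (z - s0)]
    · exact ((hg _ (hmaps w hw)).comp_const_add s0 w).differentiableAt.differentiableWithinAt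
  have hsub : ∀ z ∈ Metric.closedBall s (1 / 10), ‖z - s0‖ ≤ 13 / 10 := by
    intro z hz
    rw [Metric.mem_closedBall, dist_eq_norm] at hz
    calc ‖z - s0‖ = ‖(z - s) + (s - s0)‖ := by congr 1; ring
      _ ≤ _ := (norm_add_le _ _).trans (by linarith)
  have hsball : ∀ z : ℂ, ‖z - s0‖ ≤ 13 / 10 → z ∈ Metric.ball s0 (7 / 5) := by
    intro z hz; rw [Metric.mem_ball, dist_eq_norm]; linarith
  have hd := Complex.norm_deriv_le_of_forall_mem_sphere_norm_le (c := s) (R := 1 / 10) (C := 26 * M) (f := g)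
    (by norm_num) (DifferentiableOn.diffContOnCl (by
      intro z hz
      have hz' := Metric.closure_ball_subset_closedBall hz
      exact (hg z (hsball z (hsub z hz'))).differentiableAt.differentiableWithinAt))
    (fun z hz => hBC z (hsub z (Metric.sphere_subset_closedBall hz)))
  rw [(hg s (hsball s (by linarith))).deriv] at hd
  refine hd.trans (le_of_eq ?_)
  rw [hM]; ring

lemma three_circles (h : ℂ → ℂ) (s0 : ℂ) (r0 r2 R a b r : ℝ) (h0 : 0 < r0) (h02 : r0 < r2) (hR : r2 < R)
    (hd : DifferentiableOn ℂ h (Metric.ball s0 R))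
    (ha : ∀ z, ‖z - s0‖ = r0 → ‖h z‖ ≤ a) (hb : ∀ z, ‖z - s0‖ ≤ r2 → ‖h z‖ ≤ b)
    (hr0 : r0 ≤ r) (hr2 : r ≤ r2) :
    ‖h (s0 - r)‖ ≤ a ^ (1 - (Real.log r - Real.log r0) / (Real.log r2 - Real.log r0)) *
      b ^ ((Real.log r - Real.log r0) / (Real.log r2 - Real.log r0)) := by
  have hrpos : 0 < r := by linarith
  have hul : Real.log r0 < Real.log r2 := Real.log_lt_log h0 h02
  have hnorm : ∀ w : ℂ, ‖(s0 - Complex.exp w) - s0‖ = Real.exp w.re := by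
    intro w
    rw [show s0 - Complex.exp w - s0 = -Complex.exp w by ring, norm_neg, Complex.norm_exp]
  have hle : ∀ w : ℂ, w.re ≤ Real.log r2 → ‖(s0 - Complex.exp w) - s0‖ ≤ r2 := by
    intro w hw
    rw [hnorm, ← Real.exp_log (by linarith : 0 < r2)]
    exact Real.exp_le_exp.mpr hw
  have key := Complex.HadamardThreeLines.norm_le_interp_of_mem_verticalClosedStrip'
    (f := fun w => h (s0 - Complex.exp w)) (z := ((Real.log r : ℝ) : ℂ)) (a := a) (b := b) hul
    (by
      simp only [Complex.HadamardThreeLines.verticalClosedStrip, Set.mem_preimage, Complex.ofReal_re]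
      exact ⟨Real.log_le_log h0 hr0, Real.log_le_log hrpos hr2⟩)
    (by
      refine DifferentiableOn.diffContOnCl (fun w hw => ?_)
      have hw' : w.re ≤ Real.log r2 := by
        have : IsClosed {w : ℂ | w.re ≤ Real.log r2} := isClosed_le Complex.continuous_re continuous_const
        refine closure_minimal (fun v hv => ?_) this hw
        exact (le_of_lt hv.2 : v.re ≤ Real.log r2)
      have hball : s0 - Complex.exp w ∈ Metric.ball s0 R := by
        rw [Metric.mem_ball, dist_eq_norm]; exact (hle w hw').trans_lt hR
      have h1 : DifferentiableAt ℂ h (s0 - Complex.exp w) := hd.differentiableAt (Metric.isOpen_ball.mem_nhds hball)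
      have h2 : DifferentiableAt ℂ (fun w => s0 - Complex.exp w) w := by fun_prop
      exact (DifferentiableAt.comp w h1 h2).differentiableWithinAt)
    (by
      refine ⟨b, ?_⟩
      rintro _ ⟨w, hw, rfl⟩
      exact hb _ (hle w hw.2))
    (by
      intro w hw
      refine ha _ ?_
      rw [hnorm, show w.re = Real.log r0 from hw, Real.exp_log h0])
    (by
      intro w hw
      exact hb _ (hle w (le_of_eq hw)))
  rw [Complex.ofReal_re] at key
  rwa [← Complex.ofReal_exp, Real.exp_log hrpos] at key

lemma norm_zeta_le (s : ℂ) (hs : 1 < s.re) : ‖riemannZeta s‖ ≤ ‖riemannZeta (s.re : ℂ)‖ := by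
  have hre : 1 < (s.re : ℂ).re := by simpa using hs
  have hsum := Real.summable_nat_rpow_inv.mpr hs
  have h1 : ‖riemannZeta s‖ ≤ ∑' n : ℕ, ((n : ℝ) ^ s.re)⁻¹ := by
    rw [zeta_eq_tsum_one_div_nat_cpow hs]
    refine tsum_of_norm_bounded hsum.hasSum (fun n => ?_)
    rw [norm_div, norm_one, Complex.norm_natCast_cpow_of_re_ne_zero n (by linarith), one_div]
  have h2 : riemannZeta (s.re : ℂ) = ((∑' n : ℕ, ((n : ℝ) ^ s.re)⁻¹ : ℝ) : ℂ) := by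
    rw [zeta_eq_tsum_one_div_nat_cpow hre, Complex.ofReal_tsum]
    refine tsum_congr (fun n => ?_)
    rw [Complex.ofReal_inv, Complex.ofReal_cpow (by positivity)]
    simp
  rw [h2, Complex.norm_real]
  exact h1.trans (le_abs_self _)

lemma zeta_trivial : ∃ K : ℝ, 1 ≤ K ∧ ∀ δ t : ℝ, 0 < δ → δ ≤ 2 →
    ‖riemannZeta ⟨1 + δ, t⟩‖ ≤ K / δ ∧ (0 < t → t ≤ 10 → ‖riemannZeta ⟨1 + δ, t⟩‖ ≤ K / t) := by
  obtain ⟨K, hK1, hK⟩ := zeta1_bound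
  refine ⟨K, hK1, fun δ t h0 h2 => ⟨?_, fun ht0 ht => ?_⟩⟩
  · refine (norm_zeta_le _ (by simpa using h0)).trans ?_
    have hne : ((1 + δ : ℝ) : ℂ) ≠ 1 := by
      intro h
      have := congrArg Complex.re h
      simp at this; linarith
    simp only
    rw [riemannZeta_eq_inv_sub_mul hne, norm_mul]
    have h3 := hK ((1 + δ : ℝ) : ℂ) (by rw [Complex.ofReal_re]; linarith) (by rw [Complex.ofReal_re]; linarith)
      (by rw [Complex.ofReal_im]) (by rw [Complex.ofReal_im]; norm_num)
    have h4 : ‖(((1 + δ : ℝ) : ℂ) - 1)⁻¹‖ = 1 / δ := by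
      rw [show ((1 + δ : ℝ) : ℂ) - 1 = ((δ : ℝ) : ℂ) by push_cast; ring, norm_inv, Complex.norm_real,
        Real.norm_of_nonneg h0.le, one_div]
    rw [h4]
    calc _ ≤ 1 / δ * K := by gcongr
      _ = _ := by ring
  · have hne : (⟨1 + δ, t⟩ : ℂ) ≠ 1 := by
      intro h
      have := congrArg Complex.im h
      simp at this; linarith
    rw [riemannZeta_eq_inv_sub_mul hne, norm_mul]
    have h3 := hK ⟨1 + δ, t⟩ (by simp only; linarith) (by simp only; linarith) ht0.le ht
    have h4 : ‖((⟨1 + δ, t⟩ : ℂ) - 1)⁻¹‖ ≤ 1 / t := by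
      rw [norm_inv, ← one_div]
      refine one_div_le_one_div_of_le ht0 ?_
      refine le_trans ?_ (Complex.abs_im_le_norm _)
      simp [le_abs_self]
    calc _ ≤ 1 / t * K := by gcongr
      _ = _ := by ring

lemma near_one : ∃ D : ℝ, RiemannHypothesis → ∀ t η δ : ℝ, 10 ≤ t → 2 ≤ Real.log (Real.log t) →
    η = 1 / Real.log (Real.log t) → 0 < δ → δ ≤ η →
    Real.log ‖riemannZeta ⟨1 + δ, t⟩‖ ≤ Real.log ‖riemannZeta ⟨1 + η, t⟩‖ + D := by
  obtain ⟨A, hA1, hA⟩ := logDeriv_bound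
  obtain ⟨C, hC0, hC⟩ := vmT_bound
  have hlA : 0 ≤ Real.log A := Real.log_nonneg hA1
  refine ⟨(1 + C) * Real.exp (12 * (Real.log A + 1)), fun hRH t η δ ht hl hη hδ0 hδη => ?_⟩
  have hlt := log_ten_le t ht
  set ℓ := Real.log (Real.log t)
  have hη0 : 0 < η := by linarith
  have hη2 : η ≤ 1 / 2 := by rw [hη]; gcongr
  have hηℓ : η * ℓ = 1 := by rw [hη]; field_simp
  obtain ⟨g, hg0, hg, hgl⟩ := exists_log hRH t ht
  set s0 : ℂ := ⟨2, t⟩ with hs0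
  set a : ℝ := 1 / η + C with ha
  have ha1 : 1 ≤ a := by
    have : 1 ≤ 1 / η := by rw [le_div_iff₀ hη0]; linarith
    linarith
  have hsrc : ∀ r : ℝ, ‖(s0 - r) - s0‖ = |r| := by
    intro r
    rw [show s0 - r - s0 = -((r : ℝ) : ℂ) by ring, norm_neg, Complex.norm_real, Real.norm_eq_abs]
  have hball : ∀ r ∈ Set.Icc (1 - η) 1, s0 - (r : ℂ) ∈ Metric.ball s0 (7 / 5) := by
    intro r hr
    rw [Metric.mem_ball, dist_eq_norm, hsrc, abs_of_pos (by linarith [hr.1])]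
    linarith [hr.2]
  have hder : ∀ r ∈ Set.Icc (1 - η) 1,
      ‖deriv riemannZeta (s0 - r) / riemannZeta (s0 - r)‖ ≤ a * Real.exp (12 * (Real.log A + 1)) := by
    intro r hr
    have hr0 : 0 < r := by linarith [hr.1]
    have h3 := three_circles (fun z => deriv riemannZeta z / riemannZeta z) s0 (1 - η) (6 / 5) (7 / 5) a
      (A * Real.log t) r (by linarith) (by linarith) (by norm_num) (logDeriv_diff hRH t ht)
      (fun z hz => by
        have hzre : 1 + η ≤ z.re := by
          have := (abs_le.mp ((Complex.abs_re_le_norm _).trans hz.le)).1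
          simp only [Complex.sub_re, hs0] at this
          linarith
        refine (logDeriv_zeta_le z (by linarith)).trans ?_
        refine le_trans ?_ (hC η hη0 (by linarith))
        refine Summable.tsum_le_tsum (fun n => ?_) (vmT_summable _ (by linarith)) (vmT_summable _ (by linarith))
        unfold vmT
        rcases Nat.eq_zero_or_pos n with rfl | hn
        · simp
        · have hn1 : (1 : ℝ) ≤ n := by exact_mod_cast hn
          exact mul_le_mul_of_nonneg_left (Real.rpow_le_rpow_of_exponent_le hn1 (by linarith))
            ArithmeticFunction.vonMangoldt_nonneg)
      (fun z hz => hA hRH t ht z hz) hr.1 (by linarith [hr.2])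
    refine h3.trans ?_
    set θ := (Real.log r - Real.log (1 - η)) / (Real.log (6 / 5) - Real.log (1 - η)) with hθ
    have hl0 : Real.log (1 - η) ≤ 0 := Real.log_nonpos (by linarith) (by linarith)
    have hu : 1 / 6 ≤ Real.log (6 / 5) := by
      have := Real.one_sub_inv_le_log_of_pos (by norm_num : (0 : ℝ) < 6 / 5)
      norm_num at this ⊢; linarith
    have hln : -Real.log (1 - η) ≤ 2 * η := by
      have := Real.one_sub_inv_le_log_of_pos (by linarith : (0 : ℝ) < 1 - η)
      have h5 : (1 - η)⁻¹ ≤ 1 + 2 * η := by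
        rw [inv_le_iff_one_le_mul₀ (by linarith)]
        nlinarith
      linarith
    have hrl : Real.log (1 - η) ≤ Real.log r := Real.log_le_log (by linarith) hr.1
    have hrl1 : Real.log r ≤ 0 := Real.log_nonpos (by linarith) hr.2
    have hθ0 : 0 ≤ θ := div_nonneg (by linarith) (by linarith)
    have hθ12 : θ ≤ 12 * η := by
      rw [hθ, div_le_iff₀ (by linarith)]
      nlinarith
    have hb1 : 1 ≤ A * Real.log t := by nlinarith
    have e1 : a ^ (1 - θ) ≤ a := by
      calc a ^ (1 - θ) ≤ a ^ (1 : ℝ) := Real.rpow_le_rpow_of_exponent_le ha1 (by linarith)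
        _ = a := Real.rpow_one a
    have e2 : (A * Real.log t) ^ θ ≤ Real.exp (12 * (Real.log A + 1)) := by
      calc (A * Real.log t) ^ θ ≤ (A * Real.log t) ^ (12 * η) := Real.rpow_le_rpow_of_exponent_le hb1 hθ12
        _ = Real.exp ((Real.log A + ℓ) * (12 * η)) := by
          rw [Real.rpow_def_of_pos (by linarith), Real.log_mul (by linarith) (by linarith)]
        _ ≤ _ := by
          refine Real.exp_le_exp.mpr ?_
          have : Real.log A * η ≤ Real.log A := by nlinarith
          nlinarith
    exact mul_le_mul e1 e2 (by positivity) (by linarith)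
  have hmv := (convex_Icc (1 - η) (1 : ℝ)).norm_image_sub_le_of_norm_hasDerivWithin_le
    (f := fun r : ℝ => g (s0 - r)) (f' := fun r : ℝ => -(deriv riemannZeta (s0 - r) / riemannZeta (s0 - r)))
    (C := a * Real.exp (12 * (Real.log A + 1)))
    (fun r hr => ((hg _ (hball r hr)).comp_const_sub s0 (r : ℂ)).comp_ofReal.hasDerivWithinAt)
    (fun r hr => by rw [norm_neg]; exact hder r hr)
    (x := 1 - η) (y := 1 - δ) ⟨le_refl _, by linarith⟩ ⟨by linarith, by linarith⟩
  have p1 : ∀ d : ℝ, s0 - ((1 - d : ℝ) : ℂ) = ⟨1 + d, t⟩ := by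
    intro d
    apply Complex.ext
    · simp [hs0]; ring
    · simp [hs0]
  have q1 := hgl _ (hball (1 - η) ⟨le_refl _, by linarith⟩)
  have q2 := hgl _ (hball (1 - δ) ⟨by linarith, by linarith⟩)
  have hre := (Complex.re_le_norm _).trans hmv
  rw [Complex.sub_re] at hre
  rw [p1] at q1 q2
  rw [p1, p1] at hre
  have hd : ‖(1 - δ) - (1 - η)‖ ≤ η := by
    rw [Real.norm_eq_abs, abs_of_nonneg (by linarith)]; linarith
  have hfin : a * Real.exp (12 * (Real.log A + 1)) * ‖(1 - δ) - (1 - η)‖ ≤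
      (1 + C) * Real.exp (12 * (Real.log A + 1)) := by
    calc _ ≤ a * Real.exp (12 * (Real.log A + 1)) * η := by gcongr
      _ = (1 + C * η) * Real.exp (12 * (Real.log A + 1)) := by rw [ha]; field_simp
      _ ≤ _ := by
        gcongr
        nlinarith
  linarith

theorem stmt7 :
    ∃ C : ℝ, ∀ (α x : ℝ), 0 < α → 2 ≤ x →
      ((α ≤ 1 / Real.log x ∨ Real.exp x ≤ α) →
        ∑ p ∈ Finset.filter Nat.Prime (Finset.Iic ⌊x⌋₊),
            Real.cos (α * Real.log p) / p
          ≤ Real.log (Real.log x) + C) ∧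
      (1 / Real.log x ≤ α → α ≤ 10 →
        ∑ p ∈ Finset.filter Nat.Prime (Finset.Iic ⌊x⌋₊),
            Real.cos (α * Real.log p) / p
          ≤ Real.log (1 / α) + C) ∧
      (RiemannHypothesis → 10 ≤ α → α ≤ Real.exp x →
        ∑ p ∈ Finset.filter Nat.Prime (Finset.Iic ⌊x⌋₊),
            Real.cos (α * Real.log p) / p
          ≤ Real.log (Real.log (Real.log α)) + C) := by
  obtain ⟨C1, hC1⟩ := step1
  obtain ⟨K, hK1, hK⟩ := zeta_trivial
  obtain ⟨D, hD⟩ := near_one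
  obtain ⟨G, hG1, hG⟩ := zeta_growth
  set T := Real.exp (Real.exp 2)
  set E1 := Real.log (G * T) - Real.log (Real.log (Real.log 10))
  have hlK : 0 ≤ Real.log K := Real.log_nonneg hK1
  refine ⟨C1 + Real.log K + |D| + |E1|, fun α x hα hx => ?_⟩
  have hL : 0 < Real.log x := Real.log_pos (by linarith)
  have hL2 : 1 / 2 ≤ Real.log x := by
    have := Real.log_le_log (by norm_num) hx
    linarith [Real.log_two_gt_d9]
  have hδ0 : 0 < 1 / Real.log x := by positivity
  have hδ2 : 1 / Real.log x ≤ 2 := by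
    rw [div_le_iff₀ hL]; linarith
  have h1 := hC1 α x hx
  have hpos : ∀ d : ℝ, 0 < d → 0 < ‖riemannZeta ⟨1 + d, α⟩‖ := fun d hd =>
    norm_pos_iff.mpr (riemannZeta_ne_zero_of_one_le_re (by simp only; linarith))
  have hDn := abs_nonneg D
  have hEn := abs_nonneg E1
  refine ⟨fun _ => ?_, fun _ h10 => ?_, fun hRH h10 hx' => ?_⟩
  · have h2 := Real.log_le_log (hpos _ hδ0) (hK _ α hδ0 hδ2).1
    rw [div_div_eq_mul_div, div_one, Real.log_mul (by linarith) hL.ne'] at h2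
    linarith
  · have h2 := Real.log_le_log (hpos _ hδ0) ((hK _ α hδ0 hδ2).2 hα h10)
    rw [show K / α = K * (1 / α) by ring, Real.log_mul (by linarith) (by positivity)] at h2
    linarith
  · have hla := log_ten_le α h10
    have hl10 := log_ten_le 10 le_rfl
    by_cases hT : 2 ≤ Real.log (Real.log α)
    · have hxl : Real.log α ≤ x := by
        rw [Real.log_le_iff_le_exp hα]; exact hx'
      have hll : Real.log (Real.log α) ≤ Real.log x := Real.log_le_log (by linarith) hxl
      have hη0 : 0 < 1 / Real.log (Real.log α) := by positivity
      have h2 := hD hRH α _ (1 / Real.log x) h10 hT rfl hδ0 (by gcongr)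
      have h3 := Real.log_le_log (hpos _ hη0) (hK _ α hη0 (by
        rw [div_le_iff₀ (by linarith)]; linarith)).1
      rw [div_div_eq_mul_div, div_one, Real.log_mul (by linarith) (by linarith)] at h3
      have := le_abs_self D
      linarith
    · have hαT : α ≤ T := by
        rw [not_le, Real.log_lt_iff_lt_exp (by linarith), Real.log_lt_iff_lt_exp hα] at hT
        exact hT.le
      have h2 : ‖riemannZeta ⟨1 + 1 / Real.log x, α⟩‖ ≤ G * T := by
        refine (hG ⟨1 + 1 / Real.log x, α⟩ (by simp only; linarith) (by simp only; linarith)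
          (by simp only; linarith)).trans ?_
        simp only
        gcongr
      have h3 := Real.log_le_log (hpos _ hδ0) h2
      have h4 : Real.log (Real.log (Real.log 10)) ≤ Real.log (Real.log (Real.log α)) := by
        refine Real.log_le_log (Real.log_pos (by linarith)) (Real.log_le_log (by linarith) ?_)
        exact Real.log_le_log (by norm_num) h10
      have := le_abs_self E1
      linarith
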